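/- arXiv:2109.08362 — 2 statements merged into one kernel-verified Lean document; each statement's English description precedes it below -/
import Mathlib

section
/- Suppose t ∈ (0, max f), the level set L_t is nonempty and compact, and ∇f(x) ≠ 0 for all x ∈ L_t. Let p₀ := min{‖∇f(x)‖ : x ∈ L_t} > 0. Then for all sufficiently small η > 0, every point of L_t is within distance 2η/p₀ of L_{t+η}, i.e., the one-sided Hausdorff distance satisfies d_H(L_t | L_{t+η}) := sup_{a ∈ L_t} dist(a, L_{t+η}) ≤ 2η/p₀; in particular the Hausdorff distance d_H(L_t, L_{t+η}) → 0 as η → 0⁺. -/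
open Metric Set Filter Topology MeasureTheory

/-- A half-space has infinite volume. -/
lemma halfspace_volume {d : ℕ} (u : EuclideanSpace ℝ (Fin d)) (hu : ‖u‖ = 1) (R : ℝ) :
    volume {y : EuclideanSpace ℝ (Fin d) | R < inner ℝ u y} = ⊤ := by
  have hnt : Nontrivial (EuclideanSpace ℝ (Fin d)) :=
    ⟨⟨u, 0, by rintro rfl; simp at hu⟩⟩
  have hnc : NoncompactSpace (EuclideanSpace ℝ (Fin d)) :=
    NormedSpace.noncompactSpace ℝ (EuclideanSpace ℝ (Fin d))
  have huniv : volume (univ : Set (EuclideanSpace ℝ (Fin d))) = ⊤ :=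
    measure_univ_of_isAddLeftInvariant _
  have hball : ∀ n : ℕ, volume (ball (0 : EuclideanSpace ℝ (Fin d)) n) ≤
      volume {y : EuclideanSpace ℝ (Fin d) | R < inner ℝ u y} := by
    intro n
    rw [← Measure.addHaar_ball_center volume ((R + n + 1) • u) (n : ℝ)]
    apply measure_mono
    intro y hy
    rw [mem_ball, dist_eq_norm] at hy
    have h1 : inner ℝ u y = (R + n + 1) + inner ℝ u (y - (R + n + 1) • u) := by
      rw [inner_sub_right, inner_smul_right, real_inner_self_eq_norm_sq, hu]; ring
    have h2 := abs_real_inner_le_norm u (y - (R + n + 1) • u)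
    rw [hu, one_mul] at h2
    have h3 := (abs_le.1 h2).1
    simp only [mem_ofPred_eq]
    linarith
  have hm : Monotone fun n : ℕ => ball (0 : EuclideanSpace ℝ (Fin d)) (n : ℝ) := by
    intro a b hab
    exact ball_subset_ball (by exact_mod_cast hab)
  rw [← top_le_iff, ← huniv, ← iUnion_ball_nat (0 : EuclideanSpace ℝ (Fin d)),
    hm.measure_iUnion]
  exact iSup_le hball

/-- The superlevel set lies in any ball containing the level set. -/
lemma superlevel_bounded {d : ℕ} (f : EuclideanSpace ℝ (Fin d) → ℝ)
    (hf : Continuous f) (hfi : Integrable f) (t : ℝ) (ht : 0 < t) (R : ℝ) (hR : 0 < R)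
    (hL : ∀ x, f x = t → ‖x‖ ≤ R) (x : EuclideanSpace ℝ (Fin d)) (hx : t < f x) :
    ‖x‖ ≤ R := by
  by_contra! hlt
  have hx0 : 0 < ‖x‖ := hR.trans hlt
  set u := ‖x‖⁻¹ • x with hu
  have hu1 : ‖u‖ = 1 := by
    rw [hu, norm_smul, norm_inv, norm_norm]; field_simp
  set H := {y : EuclideanSpace ℝ (Fin d) | R < inner ℝ u y} with hH
  have hxH : x ∈ H := by
    simp only [hH, mem_ofPred_eq, hu, real_inner_smul_left, real_inner_self_eq_norm_sq]
    field_simp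
    exact hlt
  have hconv : Convex ℝ H :=
    convex_halfSpace_gt (f := fun y => inner ℝ u y)
      ((innerSL ℝ u).toLinearMap.isLinear) R
  have hsub : H ⊆ {y | t ≤ f y} := by
    intro y hy
    by_contra hyt
    simp only [mem_ofPred_eq, not_le] at hyt
    obtain ⟨z, hz, hzt⟩ := hconv.isPreconnected.intermediate_value hy hxH hf.continuousOn
      ⟨hyt.le, hx.le⟩
    have h1 := hL z hzt
    have h2 := real_inner_le_norm u z
    rw [hu1, one_mul] at h2
    have h3 : R < inner ℝ u z := hz
    linarith
  have h1 := measure_mono (μ := volume) hsub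
  rw [hH, halfspace_volume u hu1 R] at h1
  exact absurd (hfi.measure_ge_lt_top ht) (not_lt.2 h1)

/-- If `L_t` is nonempty, compact and free of critical points, then
`p₀ := min{‖∇f(x)‖ : x ∈ L_t}` is positive, for all sufficiently small `η > 0` every
point of `L_t` is within distance `2η/p₀` of `L_{t+η}` (one-sided Hausdorff bound), and
the Hausdorff distance `d_H(L_t, L_{t+η})` tends to `0` as `η → 0⁺`. -/
theorem level_sets_hausdorff_close {d : ℕ} (f : EuclideanSpace ℝ (Fin d) → ℝ)
    (hf : ContDiff ℝ 2 f) (hf_nonneg : ∀ x, 0 ≤ f x) (hf_int : ∫ x, f x = 1)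
    (t : ℝ) (ht : 0 < t) (ht_max : ∃ z, t < f z)
    (hne : {x : EuclideanSpace ℝ (Fin d) | f x = t}.Nonempty)
    (hcomp : IsCompact {x : EuclideanSpace ℝ (Fin d) | f x = t})
    (hreg : ∀ x, f x = t → gradient f x ≠ 0)
    (p₀ : ℝ)
    (hp₀ : p₀ = sInf ((fun x => ‖gradient f x‖) ''
      {x : EuclideanSpace ℝ (Fin d) | f x = t})) :
    0 < p₀ ∧
    (∃ η₀ > 0, ∀ η : ℝ, 0 < η → η < η₀ →
      ∀ a ∈ {x : EuclideanSpace ℝ (Fin d) | f x = t},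
        Metric.infDist a {z : EuclideanSpace ℝ (Fin d) | f z = t + η} ≤ 2 * η / p₀) ∧
    Tendsto (fun η : ℝ =>
        Metric.hausdorffDist {x : EuclideanSpace ℝ (Fin d) | f x = t}
          {z : EuclideanSpace ℝ (Fin d) | f z = t + η})
      (𝓝[>] (0 : ℝ)) (𝓝 0) := by
  have hdiff : Differentiable ℝ f := hf.differentiable (by norm_num)
  have hcont : Continuous f := hf.continuous
  have hfd : Continuous (fderiv ℝ f) := hf.continuous_fderiv (by norm_num)
  have hnorm : ∀ x, ‖gradient f x‖ = ‖fderiv ℝ f x‖ := fun x => by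
    rw [← toDual_gradient, LinearIsometryEquiv.norm_map]
  have hgcont : Continuous fun x => ‖gradient f x‖ := by
    simp_rw [hnorm]; exact hfd.norm
  have hfi : Integrable f := by
    by_contra h
    rw [integral_undef h] at hf_int
    exact zero_ne_one hf_int
  set L := {x : EuclideanSpace ℝ (Fin d) | f x = t} with hL
  have hp : 0 < p₀ := by
    obtain ⟨x, hx, hxe⟩ := (hcomp.image hgcont).sInf_mem (hne.image _)
    rw [hp₀, ← hxe]
    exact norm_pos_iff.2 (hreg x hx)
  have hple : ∀ a ∈ L, p₀ ≤ ‖gradient f a‖ := by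
    intro a ha
    rw [hp₀]
    exact csInf_le (hcomp.image hgcont).bddBelow ⟨a, ha, rfl⟩
  have key : ∃ η₀ > 0, ∀ η : ℝ, 0 < η → η < η₀ → ∀ a ∈ L,
      Metric.infDist a {z : EuclideanSpace ℝ (Fin d) | f z = t + η} ≤ 2 * η / p₀ := by
    have hunif := hcomp.uniformContinuousAt_of_continuousAt (fderiv ℝ f)
      (fun a _ => hfd.continuousAt) (Metric.dist_mem_uniformity (half_pos hp))
    obtain ⟨δ, hδ, hδ'⟩ := Metric.mem_uniformity_dist.1 hunif
    refine ⟨δ * p₀ / 2, by positivity, ?_⟩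
    intro η hη hηlt a ha
    have hga : 0 < ‖gradient f a‖ := hp.trans_le (hple a ha)
    set s := 2 * η / p₀ with hs
    have hs0 : 0 < s := by positivity
    have hsδ : s < δ := by
      rw [hs, div_lt_iff₀ hp]; linarith
    have hsp : s * p₀ = 2 * η := by rw [hs]; field_simp
    set b := a + (s * ‖gradient f a‖⁻¹) • gradient f a with hb
    have hba : ‖b - a‖ = s := by
      rw [hb, add_sub_cancel_left, norm_smul, norm_mul, norm_inv, norm_norm,
        Real.norm_of_nonneg hs0.le]
      field_simp
    have haB : a ∈ closedBall a s := mem_closedBall_self hs0.le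
    have hbB : b ∈ closedBall a s := by rw [mem_closedBall, dist_eq_norm, hba]
    have hmv : ‖f b - f a - fderiv ℝ f a (b - a)‖ ≤ p₀ / 2 * ‖b - a‖ := by
      apply Convex.norm_image_sub_le_of_norm_fderiv_le' (𝕜 := ℝ) (s := closedBall a s)
        (fun x _ => hdiff x) _ (convex_closedBall a s) haB hbB
      intro x hx
      have hax : dist a x < δ := by
        rw [dist_comm]; exact (mem_closedBall.1 hx).trans_lt hsδ
      have h := hδ' hax ha
      simp only [mem_ofPred_eq] at h
      rw [dist_comm, dist_eq_norm] at h
      exact h.le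
    have hder : fderiv ℝ f a (b - a) = s * ‖gradient f a‖ := by
      rw [← toDual_gradient, InnerProductSpace.toDual_apply_apply, hb, add_sub_cancel_left,
        inner_smul_right, real_inner_self_eq_norm_sq]
      field_simp
    rw [hba, hder, Real.norm_eq_abs] at hmv
    have hfa : f a = t := ha
    have h1 := (abs_le.1 hmv).1
    have h2 : s * p₀ ≤ s * ‖gradient f a‖ := mul_le_mul_of_nonneg_left (hple a ha) hs0.le
    have hfb : t + η ≤ f b := by linarith
    obtain ⟨z, hz, hzt⟩ := (convex_closedBall a s).isPreconnected.intermediate_value haB hbB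
      hcont.continuousOn (show t + η ∈ Icc (f a) (f b) from ⟨by linarith, hfb⟩)
    have hz' : z ∈ {z : EuclideanSpace ℝ (Fin d) | f z = t + η} := hzt
    refine (infDist_le_dist_of_mem hz').trans ?_
    rw [dist_comm]
    exact hz
  refine ⟨hp, key, ?_⟩
  obtain ⟨η₀, hη₀, hkey⟩ := key
  obtain ⟨R, hR, hLR⟩ := hcomp.isBounded.exists_pos_norm_le
  rw [Metric.tendsto_nhdsWithin_nhds]
  intro ε hε
  obtain ⟨δ, hδ, hfar⟩ : ∃ δ > 0, ∀ x, ‖x‖ ≤ R → ε / 2 ≤ infDist x L → δ ≤ |f x - t| := by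
    have hK : IsCompact (closedBall (0 : EuclideanSpace ℝ (Fin d)) R ∩
        {x | ε / 2 ≤ infDist x L}) :=
      (isCompact_closedBall _ _).inter_right
        (isClosed_le continuous_const (continuous_infDist_pt L))
    rcases (closedBall (0 : EuclideanSpace ℝ (Fin d)) R ∩
        {x | ε / 2 ≤ infDist x L}).eq_empty_or_nonempty with he | hne'
    · refine ⟨1, one_pos, fun x hx hx' => ?_⟩
      have : x ∈ closedBall (0 : EuclideanSpace ℝ (Fin d)) R ∩ {x | ε / 2 ≤ infDist x L} :=
        ⟨mem_closedBall_zero_iff.2 hx, hx'⟩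
      rw [he] at this
      exact this.elim
    · obtain ⟨m, hm, hmin⟩ := hK.exists_isMinOn hne'
        (f := fun x => |f x - t|) (by fun_prop)
      refine ⟨|f m - t|, ?_, fun x hx hx' => hmin ⟨mem_closedBall_zero_iff.2 hx, hx'⟩⟩
      rw [gt_iff_lt, abs_pos, sub_ne_zero]
      intro hmt
      have h0 : infDist m L = 0 := infDist_zero_of_mem hmt
      have h1 : ε / 2 ≤ infDist m L := hm.2
      linarith
  refine ⟨min η₀ (min δ (ε * p₀ / 4)), by positivity, ?_⟩
  intro η hη hηd
  have hη0 : 0 < η := hη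
  rw [Real.dist_eq, sub_zero, abs_of_pos hη0] at hηd
  obtain ⟨hη1, hη2, hη3⟩ := by simpa only [lt_min_iff] using hηd
  rw [Real.dist_eq, sub_zero, abs_of_nonneg hausdorffDist_nonneg]
  refine lt_of_le_of_lt ?_ (half_lt_self hε)
  refine hausdorffDist_le_of_infDist (half_pos hε).le ?_ ?_
  · intro x hx
    refine (hkey η hη0 hη1 x hx).trans ?_
    rw [div_le_iff₀ hp]
    linarith
  · intro z hz
    have hzt : f z = t + η := hz
    by_contra! hlt
    have h1 := superlevel_bounded f hcont hfi t ht R hR (fun x hx => hLR x hx) z (by linarith)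
    have h2 := hfar z h1 hlt.le
    rw [hzt, add_sub_cancel_left, abs_of_pos hη0] at h2
    linarith
end

section
/- Suppose t ∈ (0, max f), L_t is nonempty and compact, and ∇f ≠ 0 on L_t. For sufficiently small η > 0 there exist β ∈ (0, η) and c₀ > 0 such that on the open set G := {x : t + η − β < f(x) < t + η + β} one has ‖∇f‖ > c₀, and the descent time τ(x) := inf{s > 0 : f(x − s N(x)) = t}, with N(x) := ∇f(x)/‖∇f(x)‖, is continuously differentiable on G. -/
open Metric Set Filter Topology MeasureTheory

/-- The descent time `τ(x) = inf{s > 0 : f(x − s N(x)) = t}` along the unit normal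
direction `N(x) = ∇f(x)/‖∇f(x)‖`. -/
noncomputable def descTime {d : ℕ} (f : EuclideanSpace ℝ (Fin d) → ℝ) (t : ℝ)
    (x : EuclideanSpace ℝ (Fin d)) : ℝ :=
  sInf {s : ℝ | 0 < s ∧ f (x - s • (‖gradient f x‖⁻¹ • gradient f x)) = t}

open scoped Pointwise in
/-- Superlevel set at level `t` is compact. -/
lemma superlevel_compact {d : ℕ} (f : EuclideanSpace ℝ (Fin d) → ℝ)
    (hf : Continuous f) (hf_int : ∫ x, f x = 1)
    (t : ℝ) (ht : 0 < t)
    (hcomp : IsCompact {x : EuclideanSpace ℝ (Fin d) | f x = t}) :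
    IsCompact {x : EuclideanSpace ℝ (Fin d) | t ≤ f x} := by
  have hint : Integrable f := by
    by_contra h
    rw [integral_undef h] at hf_int
    norm_num at hf_int
  obtain ⟨R, hR0, hR⟩ := hcomp.isBounded.exists_pos_norm_le
  refine Metric.isCompact_of_isClosed_isBounded (isClosed_le continuous_const hf) ?_
  refine isBounded_iff_forall_norm_le.2 ⟨R, ?_⟩
  intro x0 hx0
  by_contra hxR
  push Not at hxR
  set U : Set (EuclideanSpace ℝ (Fin d)) := {x | t < f x ∧ R < ‖x‖} with hU
  have hx0U : x0 ∈ U := by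
    refine ⟨lt_of_le_of_ne hx0 ?_, hxR⟩
    intro h
    exact absurd (hR x0 h.symm) (not_le.2 hxR)
  have hUo : IsOpen U :=
    (isOpen_lt continuous_const hf).inter (isOpen_lt continuous_const continuous_norm)
  have hUpos : 0 < volume U := hUo.measure_pos volume ⟨x0, hx0U⟩
  have hUfin : volume U < ⊤ :=
    lt_of_le_of_lt (measure_mono fun x hx => hx.1) (hint.measure_gt_lt_top ht)
  have hsub : (2 : ℝ) • U ⊆ U := by
    rintro _ ⟨x, hx, rfl⟩
    have hnorm : ∀ s : ℝ, 1 ≤ s → R < ‖s • x‖ := by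
      intro s hs
      rw [norm_smul, Real.norm_eq_abs, abs_of_nonneg (by linarith)]
      nlinarith [hx.2, norm_nonneg x]
    refine ⟨?_, hnorm 2 (by norm_num)⟩
    by_contra hlt
    push Not at hlt
    have hc : ContinuousOn (fun s : ℝ => f (s • x)) (Icc 1 2) := by fun_prop
    have := intermediate_value_Icc' (by norm_num) hc
    obtain ⟨s, hs, hst⟩ := this (show t ∈ _ from ⟨hlt, by simpa using hx.1.le⟩)
    exact absurd (hR _ hst) (not_le.2 (hnorm s hs.1))
  have hle := measure_mono (μ := volume) hsub
  rw [Measure.addHaar_smul, finrank_euclideanSpace_fin] at hle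
  have hd : d ≠ 0 := by
    rintro rfl
    have : x0 = 0 := Subsingleton.elim _ _
    rw [this, norm_zero] at hxR
    linarith
  have h1 : (1 : ENNReal) < ENNReal.ofReal |(2 : ℝ) ^ d| := by
    rw [ENNReal.one_lt_ofReal, abs_of_pos (by positivity)]
    exact one_lt_pow₀ (by norm_num) hd
  have h2 : 1 * volume U < ENNReal.ofReal |(2 : ℝ) ^ d| * volume U :=
    (ENNReal.mul_lt_mul_iff_left hUpos.ne' hUfin.ne).2 h1
  rw [one_mul] at h2
  exact absurd hle (not_le.2 h2)

/-- Scalar implicit function theorem. -/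
lemma scalar_implicit {E : Type*} [NormedAddCommGroup E] [NormedSpace ℝ E] [CompleteSpace E]
    (F : E × ℝ → ℝ) (x0 : E) (s0 : ℝ) (hF : ContDiffAt ℝ 1 F (x0, s0)) (a : ℝ) (ha : a ≠ 0)
    (hd : HasDerivAt (fun s => F (x0, s)) a s0) :
    ∃ φ : E → ℝ, ContDiffAt ℝ 1 φ x0 ∧ φ x0 = s0 ∧ ∀ᶠ x in 𝓝 x0, F (x, φ x) = F (x0, s0) := by
  have hinv : (fderiv ℝ F (x0, s0) ∘L .inr ℝ E ℝ).IsInvertible := by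
    refine ⟨ContinuousLinearEquiv.unitsEquivAut ℝ (Units.mk0 a ha), ?_⟩
    have h1 : HasDerivAt (fun s => F (x0, s)) (fderiv ℝ F (x0, s0) (0, 1)) s0 :=
      (hF.differentiableAt (by norm_num)).hasFDerivAt.comp_hasDerivAt s0
        ((hasDerivAt_const s0 x0).prodMk (hasDerivAt_id s0))
    have h2 := hd.unique h1
    ext
    simp [h2]
  refine ⟨hF.implicitFunction (by norm_num) hinv, hF.contDiffAt_implicitFunction _ hinv,
    hF.implicitFunction_apply_self _ hinv, hF.eventually_apply_implicitFunction _ hinv⟩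

lemma contDiff_gradient {d : ℕ} (f : EuclideanSpace ℝ (Fin d) → ℝ) (hf : ContDiff ℝ 2 f) :
    ContDiff ℝ 1 (gradient f) := by
  have h : ContDiff ℝ 1 (fderiv ℝ f) := hf.fderiv_right (by norm_num)
  exact (InnerProductSpace.toDual ℝ (EuclideanSpace ℝ (Fin d))).symm.contDiff.comp h

lemma hasDerivAt_line {d : ℕ} (f : EuclideanSpace ℝ (Fin d) → ℝ) (hf : ContDiff ℝ 2 f)
    (x v : EuclideanSpace ℝ (Fin d)) (s : ℝ) :
    HasDerivAt (fun s : ℝ => f (x - s • v)) (- inner ℝ (gradient f (x - s • v)) v) s := by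
  have h1 : HasDerivAt (fun s : ℝ => x - s • v) (-v) s := by
    simpa using ((hasDerivAt_id s).smul_const v).const_sub x
  have h2 := ((hf.differentiable (by norm_num)) (x - s • v)).hasGradientAt.hasFDerivAt
  have h3 : HasDerivAt (fun s : ℝ => f (x - s • v)) _ s := h2.comp_hasDerivAt s h1
  convert h3 using 1
  simp

/-- If `L_t` is nonempty, compact, and free of critical points, then for all
sufficiently small `η > 0` there are `β ∈ (0, η)` and `c₀ > 0` such that, on the open band
`G = {x : t + η − β < f x < t + η + β}`, one has `‖∇f‖ > c₀` and the descent time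
`τ(x) = inf{s > 0 : f(x − s N(x)) = t}` is continuously differentiable on `G`. -/
theorem descent_time_continuously_differentiable {d : ℕ}
    (f : EuclideanSpace ℝ (Fin d) → ℝ)
    (hf : ContDiff ℝ 2 f) (hf_nonneg : ∀ x, 0 ≤ f x) (hf_int : ∫ x, f x = 1)
    (t : ℝ) (ht : 0 < t) (ht_max : ∃ z, t < f z)
    (hne : {x : EuclideanSpace ℝ (Fin d) | f x = t}.Nonempty)
    (hcomp : IsCompact {x : EuclideanSpace ℝ (Fin d) | f x = t})
    (hreg : ∀ x, f x = t → gradient f x ≠ 0) :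
    ∃ η₀ > 0, ∀ η : ℝ, 0 < η → η < η₀ →
      ∃ β c₀ : ℝ, 0 < β ∧ β < η ∧ 0 < c₀ ∧
        (∀ x : EuclideanSpace ℝ (Fin d),
          t + η - β < f x → f x < t + η + β → c₀ < ‖gradient f x‖) ∧
        ContDiffOn ℝ 1 (descTime f t)
          {x : EuclideanSpace ℝ (Fin d) | t + η - β < f x ∧ f x < t + η + β} := by
  have hK := superlevel_compact f hf.continuous hf_int t ht hcomp
  have hg := contDiff_gradient f hf
  have hgc := hg.continuous
  -- lower bound on `L_t`
  obtain ⟨c, hc, hcL⟩ : ∃ c > 0, ∀ x, f x = t → 2 * c < ‖gradient f x‖ := by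
    obtain ⟨z, hz, hmin⟩ := hcomp.exists_isMinOn hne hgc.norm.continuousOn
    have hp : 0 < ‖gradient f z‖ := norm_pos_iff.2 (hreg z hz)
    refine ⟨‖gradient f z‖ / 3, by positivity, fun x hx => ?_⟩
    have : ‖gradient f z‖ ≤ ‖gradient f x‖ := hmin hx
    linarith
  -- lower bound near `L_t`
  obtain ⟨δ, hδ, hcδ⟩ : ∃ δ > 0, ∀ x, t ≤ f x → f x < t + δ → 2 * c < ‖gradient f x‖ := by
    have hB : IsCompact ({x | t ≤ f x} ∩ {x | ‖gradient f x‖ ≤ 2 * c}) :=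
      hK.inter_right (isClosed_le hgc.norm continuous_const)
    rcases Set.eq_empty_or_nonempty ({x | t ≤ f x} ∩ {x | ‖gradient f x‖ ≤ 2 * c}) with he | hn
    · refine ⟨1, one_pos, fun x hx _ => ?_⟩
      by_contra h
      have : x ∈ ({x | t ≤ f x} ∩ {x | ‖gradient f x‖ ≤ 2 * c}) := ⟨hx, not_lt.1 h⟩
      rw [he] at this
      exact this
    · obtain ⟨z, hz, hmin⟩ := hB.exists_isMinOn hn hf.continuous.continuousOn
      have hzt : t < f z := lt_of_le_of_ne hz.1 fun h => absurd (hcL z h.symm) (not_lt.2 hz.2)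
      refine ⟨f z - t, by linarith, fun x hx hx2 => ?_⟩
      by_contra h
      have : f z ≤ f x := hmin (show x ∈ _ from ⟨hx, not_lt.1 h⟩)
      linarith
  -- uniform continuity
  obtain ⟨r, hr, hrU⟩ : ∃ r > 0, ∀ x y, t ≤ f x → dist x y ≤ r →
      ‖gradient f x - gradient f y‖ < c := by
    have := hK.uniformContinuousAt_of_continuousAt (gradient f) (fun a _ => hgc.continuousAt)
      (Metric.dist_mem_uniformity hc)
    obtain ⟨ε, hε, h⟩ := Metric.mem_uniformity_dist.1 this
    refine ⟨ε / 2, by positivity, fun x y hx hxy => ?_⟩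
    have := h (show dist x y < ε by linarith) hx
    rw [← dist_eq_norm]
    exact this
  set N : EuclideanSpace ℝ (Fin d) → EuclideanSpace ℝ (Fin d) :=
    fun x => ‖gradient f x‖⁻¹ • gradient f x with hN
  have hder : ∀ x, t ≤ f x → f x < t + δ → ∀ s, 0 ≤ s → s ≤ r →
      c < inner ℝ (gradient f (x - s • N x)) (N x) := by
    intro x hx1 hx2 s hs0 hsr
    have hgx := hcδ x hx1 hx2
    have hgp : 0 < ‖gradient f x‖ := by linarith
    have hNn : ‖N x‖ = 1 := by
      simp only [hN, norm_smul, norm_inv, norm_norm]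
      exact inv_mul_cancel₀ hgp.ne'
    have hd : dist x (x - s • N x) ≤ r := by
      rw [dist_eq_norm, sub_sub_cancel, norm_smul, hNn, mul_one, Real.norm_eq_abs,
        abs_of_nonneg hs0]
      exact hsr
    have h1 := hrU x _ hx1 hd
    have h2 : inner ℝ (gradient f x) (N x) = ‖gradient f x‖ := by
      simp only [hN, inner_smul_right, real_inner_self_eq_norm_sq]
      field_simp
    have h3 := real_inner_le_norm (gradient f x - gradient f (x - s • N x)) (N x)
    rw [inner_sub_left, h2, hNn, mul_one] at h3
    linarith
  have hanti : ∀ x, t ≤ f x → f x < t + δ →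
      StrictAntiOn (fun s : ℝ => f (x - s • N x)) (Icc 0 r) := by
    intro x hx1 hx2
    refine strictAntiOn_of_deriv_neg (convex_Icc 0 r)
      (fun s _ => (hasDerivAt_line f hf x (N x) s).continuousAt.continuousWithinAt) ?_
    intro s hs
    rw [interior_Icc] at hs
    rw [(hasDerivAt_line f hf x (N x) s).deriv]
    have := hder x hx1 hx2 s hs.1.le hs.2.le
    linarith
  have hdesc : ∀ x, t ≤ f x → f x < t + δ → ∀ s, 0 < s → s ≤ r → f (x - s • N x) = t →
      descTime f t x = s := by
    intro x hx1 hx2 s hs0 hsr hst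
    refine IsLeast.csInf_eq ⟨⟨hs0, hst⟩, ?_⟩
    rintro s' ⟨hs'0, hs't⟩
    by_contra hlt
    push Not at hlt
    have h := hanti x hx1 hx2 ⟨hs'0.le, by linarith⟩ ⟨hs0.le, hsr⟩ hlt
    have h' : f (x - s' • N x) = t := hs't
    simp only [h', hst, lt_irrefl] at h
  refine ⟨min (δ / 2) (c * r / 2), by positivity, ?_⟩
  intro η hη hη0
  have hη1 : η < δ / 2 := lt_of_lt_of_le hη0 (min_le_left _ _)
  have hη2 : η < c * r / 2 := lt_of_lt_of_le hη0 (min_le_right _ _)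
  refine ⟨η / 2, c, by linarith, by linarith, hc, ?_, ?_⟩
  · intro x h1 h2
    have := hcδ x (by linarith) (by linarith)
    linarith
  · rintro x0 ⟨hx1, hx2⟩
    have hA : t < f x0 := by linarith
    have hB : f x0 < t + δ := by linarith
    -- existence of a crossing
    have hend : f (x0 - r • N x0) < t := by
      have hmv := Convex.image_sub_le_mul_sub_of_deriv_le (convex_Icc (0 : ℝ) r)
        (f := fun s : ℝ => f (x0 - s • N x0)) (C := -c)
        (fun s _ => (hasDerivAt_line f hf x0 (N x0) s).continuousAt.continuousWithinAt)
        (fun s _ => (hasDerivAt_line f hf x0 (N x0) s).differentiableAt.differentiableWithinAt)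
        (fun s hs => by
          rw [interior_Icc] at hs
          rw [(hasDerivAt_line f hf x0 (N x0) s).deriv]
          have := hder x0 hA.le hB s hs.1.le hs.2.le
          linarith)
        0 (left_mem_Icc.2 hr.le) r (right_mem_Icc.2 hr.le) hr.le
      simp only [zero_smul, sub_zero] at hmv
      linarith
    have hcont : ContinuousOn (fun s : ℝ => f (x0 - s • N x0)) (Icc 0 r) :=
      fun s _ => (hasDerivAt_line f hf x0 (N x0) s).continuousAt.continuousWithinAt
    obtain ⟨s0, hs0, hs0t⟩ := intermediate_value_Ioo' hr.le hcont
      (show t ∈ _ from ⟨hend, by simpa using hA⟩)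
    have hs0t' : f (x0 - s0 • N x0) = t := hs0t
    have hgn : gradient f x0 ≠ 0 := by
      have := hcδ x0 hA.le hB
      exact norm_pos_iff.1 (by linarith)
    have hNc : ContDiffAt ℝ 1 N x0 :=
      ((hg.contDiffAt.norm ℝ hgn).inv (norm_ne_zero_iff.2 hgn)).smul hg.contDiffAt
    have hFc : ContDiffAt ℝ 1
        (fun p : EuclideanSpace ℝ (Fin d) × ℝ => f (p.1 - p.2 • N p.1)) (x0, s0) := by
      have hN' : ContDiffAt ℝ 1 (fun p : EuclideanSpace ℝ (Fin d) × ℝ => N p.1) (x0, s0) :=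
        ContDiffAt.comp (g := N) (x0, s0) hNc contDiffAt_fst
      exact (hf.of_le (by norm_num)).contDiffAt.comp (x0, s0)
        (contDiffAt_fst.sub (contDiffAt_snd.smul hN'))
    have hne0 : - inner ℝ (gradient f (x0 - s0 • N x0)) (N x0) ≠ 0 := by
      have := hder x0 hA.le hB s0 hs0.1.le hs0.2.le
      linarith
    obtain ⟨φ, hφ, hφ0, hφe⟩ := scalar_implicit
      (fun p : EuclideanSpace ℝ (Fin d) × ℝ => f (p.1 - p.2 • N p.1)) x0 s0 hFc _ hne0
      (hasDerivAt_line f hf x0 (N x0) s0)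
    have hφr : ∀ᶠ x in 𝓝 x0, φ x ∈ Ioo 0 r :=
      hφ.continuousAt.eventually_mem (by rw [hφ0]; exact Ioo_mem_nhds hs0.1 hs0.2)
    have hfA : ∀ᶠ x in 𝓝 x0, f x ∈ Ioo t (t + δ) :=
      hf.continuous.continuousAt.eventually_mem (Ioo_mem_nhds hA hB)
    refine (hφ.congr_of_eventuallyEq ?_).contDiffWithinAt
    filter_upwards [hφr, hfA, hφe] with x h1 h2 h3
    exact hdesc x h2.1.le h2.2 (φ x) h1.1 h1.2.le (h3.trans hs0t')
end
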